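/- arXiv:2305.12615 — 2 statements merged into one kernel-verified Lean document; each statement's English description precedes it below -/
import Mathlib

section
/- Under the hypotheses (H1)–(H3) on the pressure P, with k(ρ) = ∫₀^ρ √(P'(y))/y dy, define d(ρ) = 2 + ρ k''(ρ)/k'(ρ). Then d(ρ) = 1 + ρ P''(ρ)/(2P'(ρ)) and d(ρ) > 0 for every ρ > 0; there is a constant C > 0 with d(ρ) ≤ C for all ρ > 0; and, with θ₂ = (γ₂−1)/2, there exist a constant C' > 0 and a threshold ρ̄ ≥ ρ^* such that |d(ρ) − (1+θ₂)| ≤ C' ρ^{−ε} for all ρ ≥ ρ̄. -/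
open Set MeasureTheory Filter

/-!
The quantity `x f'(x) / f(x)` is the local exponent of `f`: it is additive on products, halved by
square roots, and equal to `α` for `x ^ α`. Since `k' = √P' / ρ`, the function `d = 2 + ρ k'' / k'`
is `1 + ρ P'' / (2 P')`. If `P = κ ρ ^ γ (1 + Q)`, where each differentiation of `Q` gains one power
of `ρ`, then `P' = κ γ ρ ^ (γ - 1) (1 + Q + ρ Q' / γ)` has the same form, so its local exponent is
`γ - 1` up to the size of the error. This gives the asymptotics of `d` at `0` and at infinity, and
compactness bounds `d` in between; integrability of `√P' / ρ` at `0` comes from `γ₁ > 1`.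
-/

open Asymptotics
open scoped Topology

/-- The elasticity (local power-law exponent) `x f'(x) / f(x)` of `f` at `x`. With it, the function
`d` of the theorem is `2 + elasticity (deriv k)`. -/
noncomputable def elasticity (f : ℝ → ℝ) (x : ℝ) : ℝ := x * deriv f x / f x

section Elasticity

variable {f g : ℝ → ℝ} {x : ℝ}

theorem elasticity_eq_mul_logDeriv (f : ℝ → ℝ) (x : ℝ) : elasticity f x = x * logDeriv f x :=
  mul_div_assoc _ _ _

theorem elasticity_congr (h : f =ᶠ[𝓝 x] g) : elasticity f x = elasticity g x := by
  simp only [elasticity, h.deriv_eq, h.eq_of_nhds]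

theorem elasticity_mul (hf : f x ≠ 0) (hg : g x ≠ 0) (hdf : DifferentiableAt ℝ f x)
    (hdg : DifferentiableAt ℝ g x) :
    elasticity (fun y => f y * g y) x = elasticity f x + elasticity g x := by
  simp only [elasticity_eq_mul_logDeriv, logDeriv_mul x hf hg hdf hdg, mul_add]

theorem elasticity_const_mul {c : ℝ} (hc : c ≠ 0) :
    elasticity (fun y => c * f y) x = elasticity f x := by
  simp only [elasticity_eq_mul_logDeriv, logDeriv_const_mul x c hc]

theorem elasticity_rpow_const (hx : 0 < x) (α : ℝ) : elasticity (fun y => y ^ α) x = α := by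
  have hα : x ^ α ≠ 0 := (Real.rpow_pos_of_pos hx α).ne'
  rw [elasticity, Real.deriv_rpow_const, Real.rpow_sub_one hx.ne']
  field_simp

theorem elasticity_sqrt_div_id (hx : x ≠ 0) (hf : 0 < f x) (hdf : DifferentiableAt ℝ f x) :
    elasticity (fun y => √(f y) / y) x = elasticity f x / 2 - 1 := by
  have hs : √(f x) ≠ 0 := (Real.sqrt_pos.2 hf).ne'
  have hsqrt := hdf.hasDerivAt.sqrt hf.ne'
  rw [elasticity_eq_mul_logDeriv,
    logDeriv_div (g := fun y => y) x hs hx hsqrt.differentiableAt differentiableAt_fun_id,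
    logDeriv_apply, hsqrt.deriv, logDeriv_id', elasticity]
  field_simp
  rw [Real.sq_sqrt hf.le, mul_comm]

theorem one_add_half_elasticity_pos (hf : 0 < f x) (h : 0 < 2 * f x + x * deriv f x) :
    0 < 1 + elasticity f x / 2 := by
  have : 1 + elasticity f x / 2 = (2 * f x + x * deriv f x) / (2 * f x) := by
    rw [elasticity]
    field_simp
  rw [this]
  positivity

theorem continuousOn_elasticity {s : Set ℝ} (hs : IsOpen s) (hf : ContDiffOn ℝ 1 f s)
    (hf₀ : ∀ y ∈ s, f y ≠ 0) : ContinuousOn (elasticity f) s :=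
  (continuousOn_id.mul (hf.continuousOn_deriv_of_isOpen hs le_rfl)).div hf.continuousOn hf₀

end Elasticity

/-- Along the filter `l`, the function `f` is the power law `κ x ^ γ` with relative error `Q`, i.e.
`f x = κ x ^ γ (1 + Q x)`, and the first `n` derivatives of `Q` are those of a symbol of order `s`:
`Q⁽ʲ⁾ = O(x ^ (s - j))`. The filter is meant to be `𝓝[>] 0` (with `s > 0`) or `atTop` (with
`s < 0`), which is encoded by requiring that `x > 0` and `x ^ s → 0` along `l`. -/
structure IsPowerLawAlong (l : Filter ℝ) (n : ℕ) (κ γ s : ℝ) (f Q : ℝ → ℝ) : Prop where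
  eventually_pos : ∀ᶠ x in l, 0 < x
  tendsto_rpow : Tendsto (fun x : ℝ => x ^ s) l (𝓝 0)
  eventuallyEq : ∀ᶠ x in l, f =ᶠ[𝓝 x] fun y => κ * y ^ γ * (1 + Q y)
  eventually_contDiffAt : ∀ᶠ x in l, ContDiffAt ℝ n Q x
  isBigO_iteratedDeriv : ∀ j ≤ n, iteratedDeriv j Q =O[l] fun x => x ^ (s - j)

theorem tendsto_rpow_nhdsGT_zero {s : ℝ} (hs : 0 < s) :
    Tendsto (fun x : ℝ => x ^ s) (𝓝[>] 0) (𝓝 0) := by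
  simpa only [Real.zero_rpow hs.ne'] using
    (Real.continuousAt_rpow_const 0 s (.inr hs.le)).tendsto.mono_left nhdsWithin_le_nhds

theorem iteratedDeriv_id_mul_deriv {Q : ℝ → ℝ} {n : ℕ} {x : ℝ} (hQ : ContDiffAt ℝ (n + 1) Q x) :
    iteratedDeriv n (fun y => y * deriv Q y) x =
      x * iteratedDeriv (n + 1) Q x + n * iteratedDeriv n Q x := by
  induction n generalizing x with
  | zero => simp
  | succ n ih =>
    have hn : ContDiffAt ℝ (n + 1 : ℕ) Q x := hQ.of_le (by norm_cast; lia)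
    have hnear : iteratedDeriv n (fun y => y * deriv Q y) =ᶠ[𝓝 x]
        fun y => y * iteratedDeriv (n + 1) Q y + n * iteratedDeriv n Q y :=
      (hn.eventually (by simp)).mono fun y hy => ih (by exact_mod_cast hy)
    have hdiff (m : ℕ) (hm : m < n + 2) :
        HasDerivAt (iteratedDeriv m Q) (iteratedDeriv (m + 1) Q x) x := by
      have : DifferentiableAt ℝ (iteratedDeriv m Q) x := by
        simpa only [iteratedDerivWithin_univ, differentiableWithinAt_univ] using
          hQ.contDiffWithinAt.differentiableWithinAt_iteratedDerivWithin (m := m) (s := univ)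
            (by norm_cast) (by simp)
      rw [iteratedDeriv_succ]
      exact this.hasDerivAt
    rw [iteratedDeriv_succ, hnear.deriv_eq]
    refine (((hasDerivAt_id x).mul (hdiff (n + 1) (by lia))).add
      ((hdiff n (by lia)).const_mul (n : ℝ))).deriv.trans ?_
    simp only [id]
    push_cast
    ring

namespace IsPowerLawAlong

variable {l : Filter ℝ} {n : ℕ} {κ γ s : ℝ} {f Q : ℝ → ℝ}

theorem of_isOpen {U : Set ℝ} {C : ℝ} (hU : IsOpen U) (hUl : U ∈ l) (hpos : U ⊆ Ioi 0)
    (hs : Tendsto (fun x : ℝ => x ^ s) l (𝓝 0))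
    (hf : EqOn f (fun x => κ * x ^ γ * (1 + Q x)) U) (hQ : ContDiffOn ℝ n Q U)
    (hbound : ∀ x ∈ U, ∀ j ≤ n, |iteratedDeriv j Q x| ≤ C * x ^ (s - j)) :
    IsPowerLawAlong l n κ γ s f Q where
  eventually_pos := mem_of_superset hUl hpos
  tendsto_rpow := hs
  eventuallyEq := mem_of_superset hUl fun _ hx => hf.eventuallyEq_of_mem (hU.mem_nhds hx)
  eventually_contDiffAt := mem_of_superset hUl fun _ hx => hQ.contDiffAt (hU.mem_nhds hx)
  isBigO_iteratedDeriv j hj := .of_bound C <| mem_of_superset hUl fun x hx => by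
    have hx₀ : 0 < x := hpos hx
    simpa only [mem_ofPred_eq, Real.norm_eq_abs, abs_of_pos (Real.rpow_pos_of_pos hx₀ _)]
      using hbound x hx j hj

theorem isBigO_error (h : IsPowerLawAlong l n κ γ s f Q) : Q =O[l] fun x => x ^ s := by
  simpa only [iteratedDeriv_zero, Nat.cast_zero, sub_zero] using h.isBigO_iteratedDeriv 0 n.zero_le

theorem tendsto_one_add_error (h : IsPowerLawAlong l n κ γ s f Q) :
    Tendsto (fun x => 1 + Q x) l (𝓝 1) := by
  simpa only [add_zero] using (h.isBigO_error.trans_tendsto h.tendsto_rpow).const_add 1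

theorem isBigO_rpow (h : IsPowerLawAlong l n κ γ s f Q) : f =O[l] fun x => x ^ γ := by
  have hQ : (fun x => 1 + Q x) =O[l] fun _ => (1 : ℝ) := h.tendsto_one_add_error.isBigO_one ℝ
  have heq : f =ᶠ[l] fun x => κ * x ^ γ * (1 + Q x) := h.eventuallyEq.mono fun _ hx => hx.eq_of_nhds
  simpa only [mul_one] using
    heq.trans_isBigO (((isBigO_refl (fun x : ℝ => x ^ γ) l).const_mul_left κ).mul hQ)

theorem isBigO_iteratedDeriv_id_mul_deriv (h : IsPowerLawAlong l (n + 1) κ γ s f Q) {j : ℕ}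
    (hj : j ≤ n) : iteratedDeriv j (fun x => x * deriv Q x) =O[l] fun x => x ^ (s - j) := by
  have heq : iteratedDeriv j (fun x => x * deriv Q x) =ᶠ[l]
      fun x => x * iteratedDeriv (j + 1) Q x + j * iteratedDeriv j Q x :=
    h.eventually_contDiffAt.mono fun x hx =>
      iteratedDeriv_id_mul_deriv (hx.of_le (by norm_cast; lia))
  have hpow : (fun x : ℝ => x * x ^ (s - (j + 1 : ℕ))) =ᶠ[l] fun x => x ^ (s - j) :=
    h.eventually_pos.mono fun x hx => by
      have hexp : s - (j + 1 : ℕ) + 1 = s - j := by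
        push_cast
        ring
      dsimp only
      rw [mul_comm, ← Real.rpow_add_one hx.ne', hexp]
  refine heq.trans_isBigO (.add ?_ ((h.isBigO_iteratedDeriv j (by lia)).const_mul_left _))
  exact ((isBigO_refl _ l).mul (h.isBigO_iteratedDeriv (j + 1) (by lia))).trans_eventuallyEq hpow

protected theorem deriv (h : IsPowerLawAlong l (n + 1) κ γ s f Q) (hγ : γ ≠ 0) :
    IsPowerLawAlong l n (κ * γ) (γ - 1) s (deriv f) (fun x => Q x + γ⁻¹ * (x * deriv Q x)) where
  eventually_pos := h.eventually_pos
  tendsto_rpow := h.tendsto_rpow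
  eventuallyEq := by
    filter_upwards [h.eventuallyEq, h.eventually_contDiffAt, h.eventually_pos] with x hf hQ hx
    filter_upwards [hf.eventually_nhds, hQ.eventually (by simp), eventually_gt_nhds hx]
      with y hf hQ hy
    rw [EventuallyEq.deriv_eq hf]
    have hQ' : HasDerivAt Q (deriv Q y) y := (hQ.differentiableAt (by norm_cast)).hasDerivAt
    refine (((Real.hasDerivAt_rpow_const (.inl hy.ne')).const_mul κ).mul
      (hQ'.const_add 1)).deriv.trans ?_
    rw [Real.rpow_sub_one hy.ne']
    field_simp
    ring
  eventually_contDiffAt := h.eventually_contDiffAt.mono fun x hQ =>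
    (hQ.of_le (by norm_cast; lia)).add
      (contDiffAt_const.mul (contDiffAt_id.mul (hQ.derivWithin (by norm_cast))))
  isBigO_iteratedDeriv j hj := by
    have heq : iteratedDeriv j (fun x => Q x + γ⁻¹ * (x * deriv Q x)) =ᶠ[l]
        fun x => iteratedDeriv j Q x + γ⁻¹ * iteratedDeriv j (fun x => x * deriv Q x) x :=
      h.eventually_contDiffAt.mono fun x hQ => by
        have hmul : ContDiffAt ℝ j (fun y => γ⁻¹ * (y * deriv Q y)) x :=
          contDiffAt_const.mul (contDiffAt_id.mul (hQ.derivWithin (by norm_cast; lia)))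
        dsimp only
        rw [← iteratedDeriv_const_mul_field]
        exact iteratedDeriv_add (hQ.of_le (by norm_cast; lia)) hmul
    exact heq.trans_isBigO ((h.isBigO_iteratedDeriv j (by lia)).add
      ((h.isBigO_iteratedDeriv_id_mul_deriv hj).const_mul_left _))

theorem eventually_elasticity_eq (h : IsPowerLawAlong l (n + 1) κ γ s f Q) (hκ : κ ≠ 0) :
    ∀ᶠ x in l, elasticity f x = γ + x * deriv Q x / (1 + Q x) := by
  have hQ₀ : ∀ᶠ x in l, 1 + Q x ≠ 0 := h.tendsto_one_add_error.eventually_ne one_ne_zero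
  filter_upwards [h.eventuallyEq, h.eventually_contDiffAt, h.eventually_pos, hQ₀]
    with x hf hQ hx hQ₀
  have hQ' : DifferentiableAt ℝ Q x := hQ.differentiableAt (by norm_cast)
  have hpow : DifferentiableAt ℝ (fun y : ℝ => κ * y ^ γ) x :=
    (Real.hasDerivAt_rpow_const (.inl hx.ne')).differentiableAt.const_mul κ
  have hpow₀ : κ * x ^ γ ≠ 0 := mul_ne_zero hκ (Real.rpow_pos_of_pos hx γ).ne'
  rw [elasticity_congr hf, elasticity_mul (f := fun y => κ * y ^ γ) hpow₀ hQ₀ hpow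
    (hQ'.const_add 1), elasticity_const_mul hκ, elasticity_rpow_const hx, elasticity,
    deriv_const_add]

theorem isBigO_elasticity_sub (h : IsPowerLawAlong l (n + 1) κ γ s f Q) (hκ : κ ≠ 0) :
    (fun x => elasticity f x - γ) =O[l] fun x => x ^ s := by
  have hinv : (fun x => (1 + Q x)⁻¹) =O[l] fun _ => (1 : ℝ) :=
    (h.tendsto_one_add_error.inv₀ one_ne_zero).isBigO_one ℝ
  have hnum : (fun x => x * deriv Q x) =O[l] fun x => x ^ s := by
    simpa using h.isBigO_iteratedDeriv_id_mul_deriv n.zero_le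
  have heq : (fun x => elasticity f x - γ) =ᶠ[l] fun x => x * deriv Q x * (1 + Q x)⁻¹ :=
    (h.eventually_elasticity_eq hκ).mono fun x hx => by
      simp only [hx, add_sub_cancel_left, div_eq_mul_inv]
  simpa only [mul_one] using heq.trans_isBigO (hnum.mul hinv)

theorem tendsto_elasticity (h : IsPowerLawAlong l (n + 1) κ γ s f Q) (hκ : κ ≠ 0) :
    Tendsto (elasticity f) l (𝓝 γ) :=
  tendsto_sub_nhds_zero_iff.1 ((h.isBigO_elasticity_sub hκ).trans_tendsto h.tendsto_rpow)

end IsPowerLawAlong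

theorem intervalIntegrable_zero_of_isBigO_rpow {f : ℝ → ℝ} {a x : ℝ}
    (hf : ContinuousOn f (Ioi 0)) (hO : f =O[𝓝[>] 0] fun y => y ^ a) (ha : -1 < a) (hx : 0 < x) :
    IntervalIntegrable f volume 0 x := by
  obtain ⟨c, hc, hint⟩ := mellin_convergent_zero_of_isBigO (b := -a) (s := 1)
    (hf.aestronglyMeasurable measurableSet_Ioi) (by simpa only [neg_neg] using hO) (by linarith)
  simp only [sub_self, Real.rpow_zero, one_mul] at hint
  refine ((intervalIntegrable_iff_integrableOn_Ioc_of_le hc.le).2 hint).trans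
    (hf.mono fun y hy => ?_).intervalIntegrable
  exact (lt_min hc hx).trans_le hy.1

theorem hasDerivAt_integral_zero_of_isBigO_rpow {f : ℝ → ℝ} {a x : ℝ}
    (hf : ContinuousOn f (Ioi 0)) (hO : f =O[𝓝[>] 0] fun y => y ^ a) (ha : -1 < a) (hx : 0 < x) :
    HasDerivAt (fun x => ∫ y in (0 : ℝ)..x, f y) (f x) x :=
  intervalIntegral.integral_hasDerivAt_right (intervalIntegrable_zero_of_isBigO_rpow hf hO ha hx)
    (hf.stronglyMeasurableAtFilter isOpen_Ioi x hx) (hf.continuousAt (Ioi_mem_nhds hx))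

theorem isBigO_sqrt_div_id {f : ℝ → ℝ} {a : ℝ} (hf : f =O[𝓝[>] 0] fun x => x ^ a) :
    (fun x => √(f x) / x) =O[𝓝[>] 0] fun x => x ^ (a / 2 - 1) := by
  obtain ⟨C, hC, hfC⟩ := hf.exists_nonneg
  refine .of_bound √C ?_
  filter_upwards [hfC.bound, self_mem_nhdsWithin] with x hfx hx
  have hx₀ : 0 < x := hx
  have hsqrt : √(f x) ≤ √C * x ^ (a / 2) := calc
    √(f x) ≤ √(C * x ^ a) := by
      refine Real.sqrt_le_sqrt ((le_abs_self _).trans ?_)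
      simpa only [Real.norm_eq_abs, abs_of_pos (Real.rpow_pos_of_pos hx₀ _)] using hfx
    _ = √C * x ^ (a / 2) := by
      rw [Real.sqrt_mul hC, Real.sqrt_eq_rpow (x ^ a), ← Real.rpow_mul hx₀.le, mul_one_div]
  rw [Real.norm_of_nonneg (by positivity), Real.norm_of_nonneg (by positivity),
    Real.rpow_sub_one hx₀.ne', ← mul_div_assoc]
  gcongr

theorem elasticity_deriv_integral_sqrt_div {f : ℝ → ℝ} {a x : ℝ}
    (hf : DifferentiableOn ℝ f (Ioi 0)) (hO : f =O[𝓝[>] 0] fun y => y ^ a) (ha : 0 < a)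
    (hx : 0 < x) (hfx : 0 < f x) :
    elasticity (deriv fun x => ∫ y in (0 : ℝ)..x, √(f y) / y) x = elasticity f x / 2 - 1 := by
  have hcont : ContinuousOn (fun y => √(f y) / y) (Ioi 0) :=
    hf.continuousOn.sqrt.div continuousOn_id fun y hy => ne_of_gt hy
  have hderiv : (deriv fun x => ∫ y in (0 : ℝ)..x, √(f y) / y) =ᶠ[𝓝 x] fun y => √(f y) / y := by
    filter_upwards [Ioi_mem_nhds hx] with y hy
    exact (hasDerivAt_integral_zero_of_isBigO_rpow hcont (isBigO_sqrt_div_id hO)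
      (by linarith) hy).deriv
  rw [elasticity_congr hderiv,
    elasticity_sqrt_div_id hx.ne' hfx (hf.differentiableAt (Ioi_mem_nhds hx))]

theorem exists_pos_forall_Ioi_norm_le {E : Type*} [SeminormedAddCommGroup E] {f : ℝ → E} {a : ℝ}
    (hf : ContinuousOn f (Ioi a)) (ha : f =O[𝓝[>] a] fun _ => (1 : ℝ))
    (htop : f =O[atTop] fun _ => (1 : ℝ)) : ∃ C > 0, ∀ x > a, ‖f x‖ ≤ C := by
  obtain ⟨C₀, hC₀, hf₀⟩ := ha.exists_pos
  obtain ⟨C₁, hf₁⟩ := htop.bound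
  obtain ⟨u, hu, hleft⟩ := mem_nhdsGT_iff_exists_Ioo_subset.1 hf₀.bound
  obtain ⟨v, hright⟩ := eventually_atTop.1 hf₁
  simp only [norm_one, mul_one] at hleft hright
  obtain ⟨M, hM⟩ := isCompact_Icc.exists_bound_of_continuousOn
    (hf.mono fun x (hx : x ∈ Icc u v) => hu.trans_le hx.1)
  refine ⟨max C₀ (max M C₁), lt_max_of_lt_left hC₀, fun x hx => ?_⟩
  rcases lt_or_ge x u with hxu | hxu
  · exact (hleft ⟨hx, hxu⟩).trans (le_max_left _ _)
  rcases le_total x v with hxv | hxv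
  · exact (hM x ⟨hxu, hxv⟩).trans ((le_max_left _ _).trans (le_max_right _ _))
  · exact (hright x hxv).trans ((le_max_right _ _).trans (le_max_right _ _))

theorem exists_pos_forall_ge_abs_le_rpow {f : ℝ → ℝ} {s : ℝ}
    (hf : f =O[atTop] fun x => x ^ s) (a : ℝ) :
    ∃ C > 0, ∃ b ≥ a, ∀ x ≥ b, |f x| ≤ C * x ^ s := by
  obtain ⟨C, hC, hfC⟩ := hf.exists_pos
  obtain ⟨b, hb⟩ := eventually_atTop.1 (hfC.bound.and (eventually_ge_atTop 0))
  refine ⟨C, hC, max a b, le_max_left _ _, fun x hx => ?_⟩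
  obtain ⟨hfx, hx₀⟩ := hb x ((le_max_right _ _).trans hx)
  simpa only [Real.norm_eq_abs, abs_of_nonneg (Real.rpow_nonneg hx₀ s)] using hfx

theorem IsPowerLawAlong.exists_pos_forall_elasticity_le {f Q₀ Q₁ : ℝ → ℝ}
    {n m : ℕ} {κ₀ γ₀ s₀ κ₁ γ₁ s₁ : ℝ}
    (hzero : IsPowerLawAlong (𝓝[>] 0) (n + 1) κ₀ γ₀ s₀ f Q₀) (hκ₀ : κ₀ ≠ 0)
    (htop : IsPowerLawAlong atTop (m + 1) κ₁ γ₁ s₁ f Q₁) (hκ₁ : κ₁ ≠ 0)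
    (hf : ContDiffOn ℝ 1 f (Ioi 0)) (hf₀ : ∀ x > 0, f x ≠ 0) :
    ∃ C > 0, ∀ x > 0, elasticity f x ≤ C := by
  obtain ⟨C, hC, hbound⟩ := exists_pos_forall_Ioi_norm_le
    (continuousOn_elasticity isOpen_Ioi hf hf₀)
    ((hzero.tendsto_elasticity hκ₀).isBigO_one ℝ) ((htop.tendsto_elasticity hκ₁).isBigO_one ℝ)
  exact ⟨C, hC, fun x hx => le_of_abs_le (hbound x hx)⟩

theorem d_function_bounds_general
    (P Q₁ Q₂ : ℝ → ℝ) (ρstar ρss γ₁ γ₂ κ₁ κ₂ Cs Css s₁ εe : ℝ)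
    (hP : ContDiffOn ℝ 2 P (Ioi 0))
    (hH1 : ∀ ρ : ℝ, 0 < ρ → 0 < deriv P ρ ∧ 0 < 2 * deriv P ρ + ρ * deriv (deriv P) ρ)
    (hρstar : 0 < ρstar) (hγ₁ : 1 < γ₁) (hκ₁ : κ₁ ≠ 0) (hs₁ : 0 < s₁)
    (hQ₁ : ContDiffOn ℝ 2 Q₁ (Ioo 0 ρstar))
    (hPsmall : ∀ ρ ∈ Ioo (0:ℝ) ρstar, P ρ = κ₁ * ρ ^ γ₁ * (1 + Q₁ ρ))
    (hQ₁bd : ∀ ρ ∈ Ioo (0:ℝ) ρstar, ∀ j : ℕ, j ≤ 2 →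
      |iteratedDeriv j Q₁ ρ| ≤ Cs * ρ ^ (s₁ - (j : ℝ)))
    (hρss : 0 < ρss) (hγ₂ : γ₂ ≠ 0) (hκ₂ : κ₂ ≠ 0) (hεe : 0 < εe)
    (hQ₂ : ContDiffOn ℝ 2 Q₂ (Ioi ρss))
    (hPlarge : ∀ ρ > ρss, P ρ = κ₂ * ρ ^ γ₂ * (1 + Q₂ ρ))
    (hQ₂bd : ∀ ρ > ρss, ∀ j : ℕ, j ≤ 2 →
      |iteratedDeriv j Q₂ ρ| ≤ Css * ρ ^ (-εe - (j : ℝ)))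
    (k : ℝ → ℝ) (hk : ∀ ρ : ℝ, k ρ = ∫ y in (0:ℝ)..ρ, Real.sqrt (deriv P y) / y)
    (d : ℝ → ℝ) (hd : ∀ ρ : ℝ, d ρ = 2 + ρ * deriv (deriv k) ρ / deriv k ρ) :
    (∀ ρ : ℝ, 0 < ρ → d ρ = 1 + ρ * deriv (deriv P) ρ / (2 * deriv P ρ) ∧ 0 < d ρ) ∧
    (∃ C : ℝ, 0 < C ∧ ∀ ρ : ℝ, 0 < ρ → d ρ ≤ C) ∧
    (∃ C' : ℝ, 0 < C' ∧ ∃ ρbar : ℝ, ρss ≤ ρbar ∧ ∀ ρ : ℝ, ρbar ≤ ρ →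
      |d ρ - (1 + (γ₂ - 1) / 2)| ≤ C' * ρ ^ (-εe)) := by
  have hP' : ContDiffOn ℝ 1 (deriv P) (Ioi 0) := hP.deriv_of_isOpen isOpen_Ioi (by norm_num)
  have hκγ₁ : κ₁ * γ₁ ≠ 0 := mul_ne_zero hκ₁ (zero_lt_one.trans hγ₁).ne'
  have hκγ₂ : κ₂ * γ₂ ≠ 0 := mul_ne_zero hκ₂ hγ₂
  have hzero : IsPowerLawAlong (𝓝[>] 0) 1 _ _ _ (deriv P) _ :=
    (IsPowerLawAlong.of_isOpen isOpen_Ioo (Ioo_mem_nhdsGT hρstar) Ioo_subset_Ioi_self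
      (tendsto_rpow_nhdsGT_zero hs₁) hPsmall hQ₁ hQ₁bd).deriv (right_ne_zero_of_mul hκγ₁)
  have htop : IsPowerLawAlong atTop 1 _ _ _ (deriv P) _ :=
    (IsPowerLawAlong.of_isOpen isOpen_Ioi (Ioi_mem_atTop ρss) (Ioi_subset_Ioi hρss.le)
      (tendsto_rpow_neg_atTop hεe) hPlarge hQ₂ hQ₂bd).deriv hγ₂
  have hdP : ∀ ρ > 0, d ρ = 1 + elasticity (deriv P) ρ / 2 := fun ρ hρ => by
    have := elasticity_deriv_integral_sqrt_div (hP'.differentiableOn one_ne_zero) hzero.isBigO_rpow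
      (sub_pos.2 hγ₁) hρ (hH1 ρ hρ).1
    rw [← funext hk, elasticity] at this
    rw [hd, this]
    ring
  obtain ⟨C, hC, hbound⟩ := hzero.exists_pos_forall_elasticity_le hκγ₁ htop hκγ₂ hP'
    fun ρ hρ => (hH1 ρ hρ).1.ne'
  obtain ⟨C', hC', ρbar, hρbar, hasymp⟩ :=
    exists_pos_forall_ge_abs_le_rpow (htop.isBigO_elasticity_sub hκγ₂) ρss
  refine ⟨fun ρ hρ => ⟨?_, ?_⟩, ⟨1 + C / 2, by positivity, fun ρ hρ => ?_⟩,
    C' / 2, by positivity, ρbar, hρbar, fun ρ hρ => ?_⟩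
  · rw [hdP ρ hρ, elasticity, div_div, mul_comm 2]
  · rw [hdP ρ hρ]
    exact one_add_half_elasticity_pos (hH1 ρ hρ).1 (hH1 ρ hρ).2
  · rw [hdP ρ hρ]
    linarith [hbound ρ hρ]
  · rw [hdP ρ (hρss.trans_le (hρbar.trans hρ)), add_sub_add_left_eq_sub, ← sub_div,
      abs_div, abs_two]
    linarith [hasymp ρ hρ]

theorem d_function_bounds
    (P Q₁ Q₂ : ℝ → ℝ) (ρstar ρss γ₁ γ₂ κ₁ κ₂ Cs Css εe : ℝ)
    (hPC1 : ContDiffOn ℝ 1 P (Ici 0))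
    (hPC4 : ContDiffOn ℝ 4 P (Ioi 0))
    (hH1 : ∀ ρ : ℝ, 0 < ρ → 0 < deriv P ρ ∧ 0 < 2 * deriv P ρ + ρ * deriv (deriv P) ρ)
    (hρstar : 0 < ρstar) (hγ₁ : 1 < γ₁) (hγ₁3 : γ₁ < 3) (hκ₁ : 0 < κ₁) (hCs : 0 < Cs)
    (hQ₁C4 : ContDiffOn ℝ 4 Q₁ (Ioi 0))
    (hPsmall : ∀ ρ ∈ Ico (0:ℝ) ρstar, P ρ = κ₁ * ρ ^ γ₁ * (1 + Q₁ ρ))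
    (hQ₁bd : ∀ ρ ∈ Ioo (0:ℝ) ρstar, ∀ j : ℕ, j ≤ 4 →
      |iteratedDeriv j Q₁ ρ| ≤ Cs * ρ ^ (γ₁ - 1 - (j : ℝ)))
    (hρss : ρstar < ρss) (hγ₂ : 6/5 < γ₂) (hγ₂1 : γ₂ ≤ γ₁) (hκ₂ : 0 < κ₂)
    (hεe : 0 < εe) (hCss : 0 < Css)
    (hQ₂C4 : ContDiffOn ℝ 4 Q₂ (Ioi 0))
    (hPlarge : ∀ ρ : ℝ, ρss ≤ ρ → P ρ = κ₂ * ρ ^ γ₂ * (1 + Q₂ ρ))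
    (hQ₂bd : ∀ ρ : ℝ, ρss ≤ ρ → ∀ j : ℕ, j ≤ 4 →
      |iteratedDeriv j Q₂ ρ| ≤ Css * ρ ^ (-εe - (j : ℝ))) :
    ∀ k : ℝ → ℝ, (∀ ρ : ℝ, k ρ = ∫ y in (0:ℝ)..ρ, Real.sqrt (deriv P y) / y) →
    ∀ d : ℝ → ℝ, (∀ ρ : ℝ, d ρ = 2 + ρ * deriv (deriv k) ρ / deriv k ρ) →
      (∀ ρ : ℝ, 0 < ρ → d ρ = 1 + ρ * deriv (deriv P) ρ / (2 * deriv P ρ) ∧ 0 < d ρ) ∧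
      (∃ C : ℝ, 0 < C ∧ ∀ ρ : ℝ, 0 < ρ → d ρ ≤ C) ∧
      (∃ C' : ℝ, 0 < C' ∧ ∃ ρbar : ℝ, ρss ≤ ρbar ∧ ∀ ρ : ℝ, ρbar ≤ ρ →
        |d ρ - (1 + (γ₂ - 1) / 2)| ≤ C' * ρ ^ (-εe)) :=
  d_function_bounds_general P Q₁ Q₂ ρstar ρss γ₁ γ₂ κ₁ κ₂ Cs Css (γ₁ - 1) εe
    (hPC4.of_le (by norm_num)) hH1 hρstar hγ₁ hκ₁.ne' (sub_pos.2 hγ₁)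
    ((hQ₁C4.of_le (by norm_num)).mono Ioo_subset_Ioi_self)
    (fun ρ hρ => hPsmall ρ ⟨hρ.1.le, hρ.2⟩)
    (fun ρ hρ j hj => hQ₁bd ρ hρ j (hj.trans (by norm_num)))
    (hρstar.trans hρss) (by linarith) hκ₂.ne' hεe
    ((hQ₂C4.of_le (by norm_num)).mono (Ioi_subset_Ioi (hρstar.trans hρss).le))
    (fun ρ hρ => hPlarge ρ hρ.le) (fun ρ hρ j hj => hQ₂bd ρ hρ.le j (hj.trans (by norm_num)))
end

section
/- Let δ > 0 and ε₀ ∈ (0, 4/5). Define P_δ(ρ) = ∫₀^{ρ^{1/3}} s⁴/√(δ + s^{2+ε₀}) ds for ρ > 0, set γ₂ = 4/3 − ε₀/6, let e_δ(ρ) = ∫₀^ρ P_δ(s)/s² ds (the integral converges), and let h_δ(ρ) = P_δ(ρ)/ρ − (γ₂−1) e_δ(ρ). Then for every ρ > 0 one has the identity ρ P_δ''(ρ) − (γ₂−1) P_δ'(ρ) = ((2+ε₀)/18) δ ρ^{2/3} (δ + ρ^{(2+ε₀)/3})^{−3/2} > 0, and consequently h_δ'(ρ) > 0 for all ρ > 0.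 -/
/-!
Since `e' = P / ρ²`, the derivative of `h = P / ρ - (γ - 1) e` is `(ρ P' - γ P) / ρ²`. The numerator
tends to `0` as `ρ → 0⁺`, and its derivative is `ρ P'' - (γ - 1) P'`; so `h' > 0` as soon as this
last expression is positive. For `P_δ` with `γ = 4/3 - ε₀/6` an explicit computation of
`P_δ'(ρ) = ρ^{2/3} / (3 √(δ + ρ^{(2 + ε₀)/3}))` and of its derivative shows that it is.
-/

open Set MeasureTheory Filter

open scoped Topology

lemma lt_of_strictMonoOn_Ioi_of_tendsto_nhdsGT {α β : Type*} [LinearOrder α] [DenselyOrdered α]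
    [TopologicalSpace α] [OrderTopology α] [Preorder β] [TopologicalSpace β] [ClosedIicTopology β]
    {f : α → β} {c x : α} {l : β} (hf : StrictMonoOn f (Ioi c)) (hlim : Tendsto f (𝓝[>] c) (𝓝 l))
    (hx : c < x) : l < f x := by
  obtain ⟨y, hcy, hyx⟩ := exists_between hx
  have : (𝓝[>] c).NeBot := nhdsGT_neBot_of_exists_gt ⟨x, hx⟩
  have hle : ∀ᶠ z in 𝓝[>] c, f z ≤ f y := by
    filter_upwards [Ioo_mem_nhdsGT hcy] with z hz using (hf hz.1 hcy hz.2).le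
  exact (le_of_tendsto hlim hle).trans_lt (hf hcy hx hyx)

section InternalEnergy

variable {P P' P'' : ℝ → ℝ} {γ ρ : ℝ}

/-- The specific internal energy `e` of a gas with pressure law `P`, normalised by `e(0) = 0`; it is
meaningful for `ρ ≥ 0` when `P s / s ^ 2` is integrable near `0`. -/
noncomputable def internalEnergy (P : ℝ → ℝ) (ρ : ℝ) : ℝ :=
  ∫ s in (0 : ℝ)..ρ, P s / s ^ 2

lemma internalEnergy_congr {Q : ℝ → ℝ} (h : EqOn P Q (Ioi 0)) (hρ : 0 ≤ ρ) :
    internalEnergy P ρ = internalEnergy Q ρ := by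
  refine intervalIntegral.integral_congr_uIoo fun s hs ↦ ?_
  rw [uIoo_of_le hρ] at hs
  simp only [h hs.1]

lemma intervalIntegrable_div_sq_of_norm_le_rpow {b C : ℝ} (hb : 1 < b) (hρ : 0 ≤ ρ)
    (hP : ContinuousOn P (Ioc 0 ρ)) (hle : ∀ s ∈ Ioc 0 ρ, ‖P s‖ ≤ C * s ^ b) :
    IntervalIntegrable (fun s ↦ P s / s ^ 2) volume 0 ρ := by
  have hdom : IntervalIntegrable (fun s : ℝ ↦ C * s ^ (b - 2)) volume 0 ρ :=
    (intervalIntegral.intervalIntegrable_rpow' (by linarith)).const_mul C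
  have hcont : ContinuousOn (fun s ↦ P s / s ^ 2) (Ioc 0 ρ) :=
    hP.div (continuousOn_pow 2) fun s hs ↦ pow_ne_zero 2 hs.1.ne'
  refine hdom.mono_fun' ?_ ?_ <;> rw [uIoc_of_le hρ]
  · exact hcont.aestronglyMeasurable measurableSet_Ioc
  · filter_upwards [ae_restrict_mem measurableSet_Ioc] with s hs
    have hs0 : 0 < s := hs.1
    rw [norm_div, Real.norm_of_nonneg (sq_nonneg s), Real.rpow_sub hs0, Real.rpow_two,
      ← mul_div_assoc]
    gcongr
    exact hle s hs

lemma hasDerivAt_internalEnergy (hρ : 0 < ρ) (hP : ContinuousOn P (Ioi 0))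
    (hint : IntervalIntegrable (fun s ↦ P s / s ^ 2) volume 0 ρ) :
    HasDerivAt (internalEnergy P) (P ρ / ρ ^ 2) ρ := by
  have hcont : ContinuousOn (fun s ↦ P s / s ^ 2) (Ioi 0) :=
    hP.div (continuousOn_pow 2) fun s hs ↦ pow_ne_zero 2 (ne_of_gt hs)
  exact intervalIntegral.integral_hasDerivAt_right hint
    (hcont.stronglyMeasurableAtFilter isOpen_Ioi ρ hρ) (hcont.continuousAt (Ioi_mem_nhds hρ))

lemma hasDerivAt_div_sub_mul_internalEnergy {p : ℝ} (hρ : 0 < ρ) (hP : HasDerivAt P p ρ)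
    (hcont : ContinuousOn P (Ioi 0))
    (hint : IntervalIntegrable (fun s ↦ P s / s ^ 2) volume 0 ρ) :
    HasDerivAt (fun r ↦ P r / r - (γ - 1) * internalEnergy P r)
      ((ρ * p - γ * P ρ) / ρ ^ 2) ρ := by
  refine ((hP.div (hasDerivAt_id ρ) hρ.ne').sub
    ((hasDerivAt_internalEnergy hρ hcont hint).const_mul (γ - 1))).congr_deriv ?_
  simp only [id]
  ring

lemma mul_sub_mul_pos_of_tendsto_zero (hP : ∀ r, 0 < r → HasDerivAt P (P' r) r)
    (hP' : ∀ r, 0 < r → HasDerivAt P' (P'' r) r)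
    (hpos : ∀ r, 0 < r → 0 < r * P'' r - (γ - 1) * P' r)
    (hlim : Tendsto (fun r ↦ r * P' r - γ * P r) (𝓝[>] 0) (𝓝 0)) (hρ : 0 < ρ) :
    0 < ρ * P' ρ - γ * P ρ := by
  let Q : ℝ → ℝ := fun r ↦ r * P' r - γ * P r
  have hderiv (r : ℝ) (hr : 0 < r) : HasDerivAt Q (r * P'' r - (γ - 1) * P' r) r :=
    (((hasDerivAt_id r).mul (hP' r hr)).sub ((hP r hr).const_mul γ)).congr_deriv
      (by simp only [id]; ring)
  have hmono : StrictMonoOn Q (Ioi 0) := by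
    refine strictMonoOn_of_deriv_pos (convex_Ioi 0)
      (fun r hr ↦ (hderiv r hr).continuousAt.continuousWithinAt) fun r hr ↦ ?_
    rw [interior_Ioi] at hr
    exact (hderiv r hr).deriv ▸ hpos r hr
  exact lt_of_strictMonoOn_Ioi_of_tendsto_nhdsGT (f := Q) hmono hlim hρ

theorem deriv_div_sub_mul_internalEnergy_pos (hP : ∀ r, 0 < r → HasDerivAt P (P' r) r)
    (hP' : ∀ r, 0 < r → HasDerivAt P' (P'' r) r)
    (hpos : ∀ r, 0 < r → 0 < r * P'' r - (γ - 1) * P' r)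
    (hlim : Tendsto (fun r ↦ r * P' r - γ * P r) (𝓝[>] 0) (𝓝 0)) (hρ : 0 < ρ)
    (hint : IntervalIntegrable (fun s ↦ P s / s ^ 2) volume 0 ρ) :
    0 < deriv (fun r ↦ P r / r - (γ - 1) * internalEnergy P r) ρ := by
  have hcont : ContinuousOn P (Ioi 0) := fun r hr ↦ (hP r hr).continuousAt.continuousWithinAt
  rw [(hasDerivAt_div_sub_mul_internalEnergy hρ (hP ρ hρ) hcont hint).deriv]
  exact div_pos (mul_sub_mul_pos_of_tendsto_zero hP hP' hpos hlim hρ) (by positivity)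

end InternalEnergy

section WhiteDwarf

variable {δ a ρ : ℝ}

/-- The pressure law `P_δ` with the exponent `2 + ε₀` of its denominator replaced by an arbitrary
real `a`; for `a = 2` it is, up to constants, Chandrasekhar's equation of state of a white dwarf.
Only its values at `ρ ≥ 0` are meaningful. -/
noncomputable def whiteDwarfPressure (δ a ρ : ℝ) : ℝ :=
  ∫ s in (0 : ℝ)..ρ ^ ((1 : ℝ) / 3), s ^ 4 / √(δ + s ^ a)

/-- The closed form of the derivative of `whiteDwarfPressure δ a` at `ρ > 0`. -/
noncomputable def whiteDwarfPressureDeriv (δ a ρ : ℝ) : ℝ :=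
  ρ ^ ((2 : ℝ) / 3) / (3 * √(δ + ρ ^ (a / 3)))

lemma norm_pow_div_sqrt_add_rpow_le (hδ : 0 < δ) {s : ℝ} (hs : 0 ≤ s) :
    ‖s ^ 4 / √(δ + s ^ a)‖ ≤ s ^ 4 / √δ := by
  rw [Real.norm_of_nonneg (by positivity)]
  have : 0 ≤ s ^ a := Real.rpow_nonneg hs a
  gcongr
  linarith

lemma intervalIntegrable_pow_div_sqrt_add_rpow (hδ : 0 < δ) {x : ℝ} (hx : 0 ≤ x) :
    IntervalIntegrable (fun s ↦ s ^ 4 / √(δ + s ^ a)) volume 0 x := by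
  have hdom : IntervalIntegrable (fun s : ℝ ↦ s ^ 4 / √δ) volume 0 x :=
    ((continuous_pow 4).div_const √δ).intervalIntegrable 0 x
  have hmeas : Measurable fun s : ℝ ↦ s ^ 4 / √(δ + s ^ a) := by fun_prop
  refine hdom.mono_fun' hmeas.aestronglyMeasurable ?_
  rw [uIoc_of_le hx]
  filter_upwards [ae_restrict_mem measurableSet_Ioc] with s hs
    using norm_pow_div_sqrt_add_rpow_le hδ hs.1.le

lemma hasDerivAt_integral_pow_div_sqrt_add_rpow (hδ : 0 < δ) {x : ℝ} (hx : 0 < x) :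
    HasDerivAt (fun y ↦ ∫ s in (0 : ℝ)..y, s ^ 4 / √(δ + s ^ a)) (x ^ 4 / √(δ + x ^ a)) x := by
  have hmeas : Measurable fun s : ℝ ↦ s ^ 4 / √(δ + s ^ a) := by fun_prop
  have hcont : ContinuousAt (fun s : ℝ ↦ s ^ 4 / √(δ + s ^ a)) x :=
    (continuousAt_pow x 4).div
      (continuousAt_const.add (Real.continuousAt_rpow_const x a (Or.inl hx.ne'))).sqrt
      (by positivity)
  exact intervalIntegral.integral_hasDerivAt_right
    (intervalIntegrable_pow_div_sqrt_add_rpow hδ hx.le)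
    hmeas.stronglyMeasurable.stronglyMeasurableAtFilter hcont

lemma hasDerivAt_whiteDwarfPressure (hδ : 0 < δ) (hρ : 0 < ρ) :
    HasDerivAt (whiteDwarfPressure δ a) (whiteDwarfPressureDeriv δ a ρ) ρ := by
  have hroot := Real.hasDerivAt_rpow_const (p := (1 : ℝ) / 3) (Or.inl hρ.ne')
  have hinner : (ρ ^ ((1 : ℝ) / 3)) ^ a = ρ ^ (a / 3) := by
    rw [← Real.rpow_mul hρ.le, one_div_mul_eq_div]
  have houter : (ρ ^ ((1 : ℝ) / 3)) ^ 4 * ρ ^ ((1 : ℝ) / 3 - 1) = ρ ^ ((2 : ℝ) / 3) := by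
    rw [← Real.rpow_mul_natCast hρ.le, ← Real.rpow_add hρ]
    norm_num
  have hprim := hasDerivAt_integral_pow_div_sqrt_add_rpow (a := a) hδ
    (Real.rpow_pos_of_pos hρ ((1 : ℝ) / 3))
  refine (hprim.comp ρ hroot).congr_deriv ?_
  rw [hinner, whiteDwarfPressureDeriv, ← houter]
  ring

-- The value of the derivative is written so that solving for the last summand gives the identity
-- for `ρ P'' - (γ - 1) P'` with `γ - 1 = 2/3 - a/6`.
lemma hasDerivAt_whiteDwarfPressureDeriv (hδ : 0 < δ) (hρ : 0 < ρ) :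
    HasDerivAt (whiteDwarfPressureDeriv δ a)
      (((2 / 3 - a / 6) * whiteDwarfPressureDeriv δ a ρ +
        a / 18 * δ * ρ ^ ((2 : ℝ) / 3) * (δ + ρ ^ (a / 3)) ^ (-(3 : ℝ) / 2)) / ρ) ρ := by
  have hD : 0 < δ + ρ ^ (a / 3) := by positivity
  have hsq : √(δ + ρ ^ (a / 3)) ^ 2 = δ + ρ ^ (a / 3) := Real.sq_sqrt hD.le
  have hnum := Real.hasDerivAt_rpow_const (p := (2 : ℝ) / 3) (Or.inl hρ.ne')
  have hden := (((Real.hasDerivAt_rpow_const (p := a / 3) (Or.inl hρ.ne')).const_add δ).sqrt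
    hD.ne').const_mul 3
  have hrpow : (δ + ρ ^ (a / 3)) ^ (-(3 : ℝ) / 2) = (√(δ + ρ ^ (a / 3)) ^ 3)⁻¹ := by
    rw [neg_div, Real.rpow_neg hD.le, Real.sqrt_eq_rpow, ← Real.rpow_mul_natCast hD.le]
    norm_num
  refine (hnum.div hden (by positivity)).congr_deriv ?_
  rw [hrpow, whiteDwarfPressureDeriv, Real.rpow_sub_one hρ.ne', Real.rpow_sub_one hρ.ne']
  field_simp
  rw [hsq]
  ring

lemma norm_whiteDwarfPressure_le (hδ : 0 < δ) (hρ : 0 ≤ ρ) :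
    ‖whiteDwarfPressure δ a ρ‖ ≤ (√δ)⁻¹ * ρ ^ ((5 : ℝ) / 3) := by
  set x := ρ ^ ((1 : ℝ) / 3) with hx
  have hx0 : 0 ≤ x := Real.rpow_nonneg hρ _
  have hx5 : x ^ 4 * x = ρ ^ ((5 : ℝ) / 3) := by
    rw [← pow_succ, hx, ← Real.rpow_mul_natCast hρ]
    norm_num
  have hbound : ∀ s ∈ uIoc 0 x, ‖s ^ 4 / √(δ + s ^ a)‖ ≤ x ^ 4 / √δ := by
    intro s hs
    rw [uIoc_of_le hx0] at hs
    have hs0 : 0 ≤ s := hs.1.le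
    refine (norm_pow_div_sqrt_add_rpow_le hδ hs0).trans ?_
    gcongr
    exact hs.2
  calc ‖whiteDwarfPressure δ a ρ‖
      ≤ x ^ 4 / √δ * |x - 0| := intervalIntegral.norm_integral_le_of_norm_le_const hbound
    _ = (√δ)⁻¹ * ρ ^ ((5 : ℝ) / 3) := by rw [sub_zero, abs_of_nonneg hx0, ← hx5]; ring

lemma norm_whiteDwarfPressureDeriv_le (hδ : 0 < δ) (hρ : 0 ≤ ρ) :
    ‖whiteDwarfPressureDeriv δ a ρ‖ ≤ ρ ^ ((2 : ℝ) / 3) / (3 * √δ) := by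
  have : 0 ≤ ρ ^ (a / 3) := Real.rpow_nonneg hρ _
  rw [whiteDwarfPressureDeriv, Real.norm_of_nonneg (by positivity)]
  gcongr
  linarith

lemma tendsto_whiteDwarfPressure_zero (hδ : 0 < δ) :
    Tendsto (whiteDwarfPressure δ a) (𝓝[>] 0) (𝓝 0) := by
  have hdom : Continuous fun r : ℝ ↦ (√δ)⁻¹ * r ^ ((5 : ℝ) / 3) :=
    continuous_const.mul (Real.continuous_rpow_const (by norm_num))
  refine squeeze_zero_norm' ?_ ((hdom.tendsto' 0 0 (by norm_num)).mono_left nhdsWithin_le_nhds)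
  filter_upwards [self_mem_nhdsWithin] with r hr using norm_whiteDwarfPressure_le hδ (le_of_lt hr)

lemma tendsto_whiteDwarfPressureDeriv_zero (hδ : 0 < δ) :
    Tendsto (whiteDwarfPressureDeriv δ a) (𝓝[>] 0) (𝓝 0) := by
  have hdom : Continuous fun r : ℝ ↦ r ^ ((2 : ℝ) / 3) / (3 * √δ) :=
    (Real.continuous_rpow_const (by norm_num)).div_const _
  refine squeeze_zero_norm' ?_ ((hdom.tendsto' 0 0 (by norm_num)).mono_left nhdsWithin_le_nhds)
  filter_upwards [self_mem_nhdsWithin] with r hr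
    using norm_whiteDwarfPressureDeriv_le hδ (le_of_lt hr)

lemma intervalIntegrable_whiteDwarfPressure_div_sq (hδ : 0 < δ) (hρ : 0 ≤ ρ) :
    IntervalIntegrable (fun s ↦ whiteDwarfPressure δ a s / s ^ 2) volume 0 ρ :=
  intervalIntegrable_div_sq_of_norm_le_rpow (by norm_num) hρ
    (fun _ hs ↦ (hasDerivAt_whiteDwarfPressure hδ hs.1).continuousAt.continuousWithinAt)
    fun _ hs ↦ norm_whiteDwarfPressure_le hδ hs.1.le

lemma mul_deriv_deriv_whiteDwarfPressure_sub (hδ : 0 < δ) (hρ : 0 < ρ) :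
    ρ * deriv (deriv (whiteDwarfPressure δ a)) ρ -
        (2 / 3 - a / 6) * deriv (whiteDwarfPressure δ a) ρ =
      a / 18 * δ * ρ ^ ((2 : ℝ) / 3) * (δ + ρ ^ (a / 3)) ^ (-(3 : ℝ) / 2) := by
  have hderiv : deriv (whiteDwarfPressure δ a) =ᶠ[𝓝 ρ] whiteDwarfPressureDeriv δ a := by
    filter_upwards [Ioi_mem_nhds hρ] with r hr using (hasDerivAt_whiteDwarfPressure hδ hr).deriv
  rw [hderiv.deriv_eq, hderiv.eq_of_nhds, (hasDerivAt_whiteDwarfPressureDeriv hδ hρ).deriv,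
    mul_div_cancel₀ _ hρ.ne', add_sub_cancel_left]

lemma deriv_whiteDwarfPressure_div_sub_mul_internalEnergy_pos (hδ : 0 < δ) (ha : 0 < a)
    (hρ : 0 < ρ) :
    0 < deriv (fun r ↦ whiteDwarfPressure δ a r / r -
      (5 / 3 - a / 6 - 1) * internalEnergy (whiteDwarfPressure δ a) r) ρ := by
  have hlim : Tendsto (fun r ↦ r * whiteDwarfPressureDeriv δ a r -
      (5 / 3 - a / 6) * whiteDwarfPressure δ a r) (𝓝[>] 0) (𝓝 0) := by
    simpa using ((tendsto_id.mono_left nhdsWithin_le_nhds).mul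
      (tendsto_whiteDwarfPressureDeriv_zero hδ)).sub
        ((tendsto_whiteDwarfPressure_zero hδ).const_mul (5 / 3 - a / 6))
  refine deriv_div_sub_mul_internalEnergy_pos (fun r hr ↦ hasDerivAt_whiteDwarfPressure hδ hr)
    (fun r hr ↦ hasDerivAt_whiteDwarfPressureDeriv hδ hr) (fun r hr ↦ ?_) hlim hρ
    (intervalIntegrable_whiteDwarfPressure_div_sq hδ hρ.le)
  have hγ : 5 / 3 - a / 6 - 1 = 2 / 3 - a / 6 := by ring
  rw [mul_div_cancel₀ _ hr.ne', hγ, add_sub_cancel_left]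
  positivity

end WhiteDwarf

theorem example_pressure_h_increasing_general
    (δ ε₀ : ℝ) (hδ : 0 < δ) (hε₀ : -2 < ε₀)
    (Pδ : ℝ → ℝ)
    (hPδ : ∀ ρ : ℝ, 0 < ρ →
      Pδ ρ = ∫ s in (0 : ℝ)..(ρ ^ ((1 : ℝ) / 3)), s ^ 4 / Real.sqrt (δ + s ^ (2 + ε₀))) :
    (∀ ρ : ℝ, 0 < ρ → IntervalIntegrable (fun s ↦ Pδ s / s ^ 2) volume 0 ρ) ∧
    ∀ eδ : ℝ → ℝ, (∀ ρ : ℝ, eδ ρ = ∫ s in (0 : ℝ)..ρ, Pδ s / s ^ 2) →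
    ∀ hδfun : ℝ → ℝ,
      (∀ ρ : ℝ, 0 < ρ → hδfun ρ = Pδ ρ / ρ - ((4 : ℝ) / 3 - ε₀ / 6 - 1) * eδ ρ) →
      ∀ ρ : ℝ, 0 < ρ →
        (ρ * deriv (deriv Pδ) ρ - ((4 : ℝ) / 3 - ε₀ / 6 - 1) * deriv Pδ ρ
          = (2 + ε₀) / 18 * δ * ρ ^ ((2 : ℝ) / 3) *
            (δ + ρ ^ ((2 + ε₀) / 3)) ^ (-(3 : ℝ) / 2)) ∧
        0 < ρ * deriv (deriv Pδ) ρ - ((4 : ℝ) / 3 - ε₀ / 6 - 1) * deriv Pδ ρ ∧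
        0 < deriv hδfun ρ := by
  have ha : 0 < 2 + ε₀ := by linarith
  have hEq : EqOn Pδ (whiteDwarfPressure δ (2 + ε₀)) (Ioi 0) := hPδ
  refine ⟨fun ρ hρ ↦ ?_, fun eδ he hδfun hh ρ hρ ↦ ?_⟩
  · refine (intervalIntegrable_whiteDwarfPressure_div_sq (a := 2 + ε₀) hδ hρ.le).congr fun s hs ↦ ?_
    rw [uIoc_of_le hρ.le] at hs
    simp only [hEq hs.1]
  have hP : Pδ =ᶠ[𝓝 ρ] whiteDwarfPressure δ (2 + ε₀) := hEq.eventuallyEq_of_mem (Ioi_mem_nhds hρ)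
  have hh' : hδfun =ᶠ[𝓝 ρ] fun r ↦ whiteDwarfPressure δ (2 + ε₀) r / r -
      (5 / 3 - (2 + ε₀) / 6 - 1) * internalEnergy (whiteDwarfPressure δ (2 + ε₀)) r := by
    filter_upwards [Ioi_mem_nhds hρ] with r hr
    rw [hh r hr, he r, ← internalEnergy, internalEnergy_congr hEq (le_of_lt hr), hEq hr]
    ring
  have hid := mul_deriv_deriv_whiteDwarfPressure_sub (a := 2 + ε₀) hδ hρ
  rw [← hP.deriv.deriv_eq, ← hP.deriv_eq,
    show 2 / 3 - (2 + ε₀) / 6 = 4 / 3 - ε₀ / 6 - 1 by ring] at hid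
  refine ⟨hid, hid ▸ by positivity, ?_⟩
  rw [hh'.deriv_eq]
  exact deriv_whiteDwarfPressure_div_sub_mul_internalEnergy_pos hδ ha hρ

theorem example_pressure_h_increasing
    (δ ε₀ : ℝ) (hδ : 0 < δ) (hε₀ : 0 < ε₀) (hε₀' : ε₀ < 4/5)
    (Pδ : ℝ → ℝ)
    (hPδ : ∀ ρ : ℝ, 0 < ρ →
      Pδ ρ = ∫ s in (0:ℝ)..(ρ ^ ((1:ℝ)/3)), s ^ 4 / Real.sqrt (δ + s ^ (2 + ε₀))) :
    (∀ ρ : ℝ, 0 < ρ → IntervalIntegrable (fun s => Pδ s / s ^ 2) volume 0 ρ) ∧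
    ∀ eδ : ℝ → ℝ, (∀ ρ : ℝ, eδ ρ = ∫ s in (0:ℝ)..ρ, Pδ s / s ^ 2) →
    ∀ hδfun : ℝ → ℝ,
      (∀ ρ : ℝ, 0 < ρ → hδfun ρ = Pδ ρ / ρ - ((4:ℝ)/3 - ε₀/6 - 1) * eδ ρ) →
      ∀ ρ : ℝ, 0 < ρ →
        (ρ * deriv (deriv Pδ) ρ - ((4:ℝ)/3 - ε₀/6 - 1) * deriv Pδ ρ
          = (2 + ε₀) / 18 * δ * ρ ^ ((2:ℝ)/3) * (δ + ρ ^ ((2 + ε₀)/3)) ^ (-(3:ℝ)/2)) ∧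
        0 < ρ * deriv (deriv Pδ) ρ - ((4:ℝ)/3 - ε₀/6 - 1) * deriv Pδ ρ ∧
        0 < deriv hδfun ρ :=
  example_pressure_h_increasing_general δ ε₀ hδ (by linarith) Pδ hPδ
end
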